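/- Let N > 2 be an integer, Ω ⊂ ℝ^N a nonempty bounded open set with 0 ∈ Ω, let 0 < α < N/2, set D_Ω = 2·sup_{x∈Ω}|x|, and let ρ ∈ [−1,1] ∖ {0}. Define dτ = d(x)|x|^{−α} dx on Ω ∖ {0} and f(x) = ρ · d(x)|x|^{−α}|ln(|x|/D_Ω)|. Suppose there exists C₀ > 0 such that for every measurable A ⊂ Ω ∖ {0} with 0 < τ(A): ∫_A |f| dτ ≤ C₀ |ρ| τ(A)^{1−α/(N−α)} ln(e + τ(A)^{−1}). Then there exists C = C(N, Ω, α, C₀) > 0 such that for every λ > 0, the set Ã_λ = { x ∈ Ω∖{0} : |f(x)| > λ } satisfies ∫_{Ã_λ} d(x)|x|^{−α} dx ≤ C ( λ^{−1} ln(e+λ) )^{(N−α)/α} ( |ρ| ln(e+|ρ|^{−1}) )^{(N−α)/α}. -/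

import Mathlib

/-!
Write `τ` for the weighted measure and `γ = α / (N - α)`. On a measurable `A` of finite measure
inside the superlevel set `{t < |f|}`, Markov's inequality turns the hypothesis into
`m ^ γ * s ≤ C₀ * log (e + m⁻¹)` with `m = τ A` and `s = t / |ρ|`. Either `m ^ γ ≤ s⁻¹`, or
`m⁻¹ ≤ s ^ γ⁻¹`, in which case `log (e + m⁻¹) ≤ γ⁻¹ * log (e + s)`; both ways `m ^ γ` is at most
a constant times `s⁻¹ * log (e + s)`, and the logarithm splits into factors in `t` and `|ρ|⁻¹`.
Since `τ` is σ-finite, the bound passes from such `A` to the whole superlevel set.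
-/

open MeasureTheory Metric Set

/-- The weight `d(x)|x|^{−α}`. -/
noncomputable def wgt (N : ℕ) (Ω : Set (EuclideanSpace ℝ (Fin N))) (α : ℝ)
    (x : EuclideanSpace ℝ (Fin N)) : ℝ :=
  infDist x (frontier Ω) * ‖x‖ ^ (-α)

/-- The function `f(x) = ρ d(x)|x|^{−α} |ln(|x|/D_Ω)|`. -/
noncomputable def logFun (N : ℕ) (Ω : Set (EuclideanSpace ℝ (Fin N))) (α ρ : ℝ)
    (x : EuclideanSpace ℝ (Fin N)) : ℝ :=
  ρ * (infDist x (frontier Ω) * ‖x‖ ^ (-α) *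
    |Real.log (‖x‖ / (2 * sSup ((fun z => ‖z‖) '' Ω)))|)

section LogInequalities

variable {x y s p : ℝ}

theorem one_le_log_exp_one_add (hx : 0 ≤ x) : 1 ≤ Real.log (Real.exp 1 + x) := by
  rw [Real.le_log_iff_exp_le (by positivity)]
  linarith

theorem log_exp_one_add_mul_le_add (hx : 0 ≤ x) (hy : 0 ≤ y) :
    Real.log (Real.exp 1 + x * y) ≤
      Real.log (Real.exp 1 + x) + Real.log (Real.exp 1 + y) := by
  have he : 1 ≤ Real.exp 1 := Real.one_le_exp zero_le_one
  rw [← Real.log_mul (by positivity) (by positivity)]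
  refine Real.log_le_log (by positivity) ?_
  nlinarith [mul_nonneg hx (Real.exp_pos 1).le, mul_nonneg hy (Real.exp_pos 1).le]

theorem log_exp_one_add_mul_le_two_mul (hx : 0 ≤ x) (hy : 0 ≤ y) :
    Real.log (Real.exp 1 + x * y) ≤
      2 * (Real.log (Real.exp 1 + x) * Real.log (Real.exp 1 + y)) := by
  nlinarith [log_exp_one_add_mul_le_add hx hy, one_le_log_exp_one_add hx,
    one_le_log_exp_one_add hy]

theorem log_exp_one_add_rpow_le (hs : 0 ≤ s) (hp : 1 ≤ p) :
    Real.log (Real.exp 1 + s ^ p) ≤ p * Real.log (Real.exp 1 + s) := by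
  rw [← Real.log_rpow (by positivity)]
  refine Real.log_le_log (by positivity) ?_
  calc Real.exp 1 + s ^ p ≤ Real.exp 1 ^ p + s ^ p := by
        gcongr
        exact Real.self_le_rpow_of_one_le (Real.one_le_exp zero_le_one) hp
    _ ≤ (Real.exp 1 + s) ^ p := Real.add_rpow_le_rpow_add (Real.exp_pos 1).le hs hp

end LogInequalities

/-- The logarithmic weak-space modulus `K M^{1-γ} ln(e + M⁻¹)`, which bounds the integral of a
function over a set of measure `M`. The inverse is taken in `ℝ≥0∞` before passing to `ℝ`, so
`M = ∞` gives `M⁻¹ = 0`. -/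
noncomputable def logModulus (γ K : ℝ) (M : ENNReal) : ENNReal :=
  ENNReal.ofReal K * M ^ (1 - γ) * ENNReal.ofReal (Real.log (Real.exp 1 + M⁻¹.toReal))

section Inversion

variable {γ C₀ m r s t : ℝ}

theorem logModulus_ofReal {K : ℝ} (hK : 0 ≤ K) (hm : 0 < m) :
    logModulus γ K (ENNReal.ofReal m) =
      ENNReal.ofReal (K * m ^ (1 - γ) * Real.log (Real.exp 1 + m⁻¹)) := by
  rw [logModulus, ENNReal.toReal_inv, ENNReal.toReal_ofReal hm.le, ENNReal.ofReal_rpow_of_pos hm,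
    ← ENNReal.ofReal_mul hK, ← ENNReal.ofReal_mul (by positivity)]

theorem log_exp_one_add_inv_le_of_inv_le_rpow (hγ : 0 < γ) (hγ1 : γ ≤ 1) (hm : 0 < m)
    (hs : 0 < s) (h : s⁻¹ ≤ m ^ γ) :
    Real.log (Real.exp 1 + m⁻¹) ≤ γ⁻¹ * Real.log (Real.exp 1 + s) := by
  have hms : m⁻¹ ≤ s ^ γ⁻¹ := by
    rw [Real.le_rpow_inv_iff_of_pos (by positivity) hs.le hγ, Real.inv_rpow hm.le]
    exact inv_le_of_inv_le₀ hs h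
  calc Real.log (Real.exp 1 + m⁻¹) ≤ Real.log (Real.exp 1 + s ^ γ⁻¹) := by gcongr
    _ ≤ γ⁻¹ * Real.log (Real.exp 1 + s) :=
      log_exp_one_add_rpow_le hs.le ((one_le_inv₀ hγ).2 hγ1)

theorem rpow_le_of_rpow_mul_le_log (hγ : 0 < γ) (hγ1 : γ ≤ 1) (hC₀ : 0 ≤ C₀) (hm : 0 < m)
    (hs : 0 < s) (h : m ^ γ * s ≤ C₀ * Real.log (Real.exp 1 + m⁻¹)) :
    m ^ γ ≤ max 1 (C₀ / γ) * (s⁻¹ * Real.log (Real.exp 1 + s)) := by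
  have hlog := one_le_log_exp_one_add hs.le
  rcases le_total (m ^ γ) s⁻¹ with hsmall | hlarge
  · calc m ^ γ ≤ 1 * (s⁻¹ * 1) := by simpa using hsmall
      _ ≤ max 1 (C₀ / γ) * (s⁻¹ * Real.log (Real.exp 1 + s)) := by
        gcongr
        exact le_max_left _ _
  · calc m ^ γ = m ^ γ * s * s⁻¹ := by field_simp
      _ ≤ C₀ * (γ⁻¹ * Real.log (Real.exp 1 + s)) * s⁻¹ := by
        refine mul_le_mul_of_nonneg_right (h.trans ?_) (by positivity)
        gcongr
        exact log_exp_one_add_inv_le_of_inv_le_rpow hγ hγ1 hm hs hlarge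
      _ = C₀ / γ * (s⁻¹ * Real.log (Real.exp 1 + s)) := by ring
      _ ≤ max 1 (C₀ / γ) * (s⁻¹ * Real.log (Real.exp 1 + s)) := by
        gcongr
        exact le_max_right _ _

theorem rpow_mul_div_le_of_mul_le (hm : 0 < m) (hr : 0 < r) {L : ℝ}
    (h : t * m ≤ C₀ * r * m ^ (1 - γ) * L) : m ^ γ * (t / r) ≤ C₀ * L := by
  have hsplit : m ^ γ * m ^ (1 - γ) = m := by
    rw [← Real.rpow_add hm, add_sub_cancel, Real.rpow_one]
  refine le_of_mul_le_mul_right ?_ (by positivity : 0 < r * m ^ (1 - γ))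
  calc m ^ γ * (t / r) * (r * m ^ (1 - γ)) = t * (m ^ γ * m ^ (1 - γ)) := by field_simp
    _ = t * m := by rw [hsplit]
    _ ≤ C₀ * r * m ^ (1 - γ) * L := h
    _ = C₀ * L * (r * m ^ (1 - γ)) := by ring

theorem le_of_mul_le_mul_rpow_mul_log (hγ : 0 < γ) (hγ1 : γ ≤ 1) (hC₀ : 0 ≤ C₀) (hm : 0 < m)
    (hr : 0 < r) (ht : 0 < t)
    (h : t * m ≤ C₀ * r * m ^ (1 - γ) * Real.log (Real.exp 1 + m⁻¹)) :
    m ≤ (2 * max 1 (C₀ / γ)) ^ γ⁻¹ * (t⁻¹ * Real.log (Real.exp 1 + t)) ^ γ⁻¹ *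
      (r * Real.log (Real.exp 1 + r⁻¹)) ^ γ⁻¹ := by
  have hlog_t := one_le_log_exp_one_add ht.le
  have hlog_r := one_le_log_exp_one_add (inv_pos.2 hr).le
  have hpow : m ^ γ ≤ 2 * max 1 (C₀ / γ) * (t⁻¹ * Real.log (Real.exp 1 + t)) *
      (r * Real.log (Real.exp 1 + r⁻¹)) :=
    calc m ^ γ ≤ max 1 (C₀ / γ) * ((t / r)⁻¹ * Real.log (Real.exp 1 + t / r)) :=
          rpow_le_of_rpow_mul_le_log hγ hγ1 hC₀ hm (div_pos ht hr)
            (rpow_mul_div_le_of_mul_le hm hr h)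
      _ ≤ max 1 (C₀ / γ) * ((t / r)⁻¹ *
          (2 * (Real.log (Real.exp 1 + t) * Real.log (Real.exp 1 + r⁻¹)))) := by
        gcongr
        exact log_exp_one_add_mul_le_two_mul ht.le (inv_pos.2 hr).le
      _ = _ := by rw [inv_div]; ring
  rwa [← Real.mul_rpow (by positivity) (by positivity),
    ← Real.mul_rpow (by positivity) (by positivity),
    Real.le_rpow_inv_iff_of_pos hm.le (by positivity) hγ]

theorem le_of_ofReal_mul_le_logModulus {M : ENNReal} (hγ : 0 < γ) (hγ1 : γ ≤ 1) (hC₀ : 0 ≤ C₀)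
    (hr : 0 < r) (ht : 0 < t) (hM₀ : M ≠ 0) (hM : M ≠ ⊤)
    (h : ENNReal.ofReal t * M ≤ logModulus γ (C₀ * r) M) :
    M ≤ ENNReal.ofReal ((2 * max 1 (C₀ / γ)) ^ γ⁻¹ * (t⁻¹ * Real.log (Real.exp 1 + t)) ^ γ⁻¹ *
      (r * Real.log (Real.exp 1 + r⁻¹)) ^ γ⁻¹) := by
  obtain ⟨m, hm, rfl⟩ : ∃ m : ℝ, 0 < m ∧ M = ENNReal.ofReal m :=
    ⟨M.toReal, ENNReal.toReal_pos hM₀ hM, (ENNReal.ofReal_toReal hM).symm⟩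
  have hlog := one_le_log_exp_one_add (inv_pos.2 hm).le
  rw [logModulus_ofReal (by positivity) hm, ← ENNReal.ofReal_mul ht.le,
    ENNReal.ofReal_le_ofReal_iff (by positivity)] at h
  exact ENNReal.ofReal_le_ofReal (le_of_mul_le_mul_rpow_mul_log hγ hγ1 hC₀ hm hr ht h)

end Inversion

section SuperlevelSets

variable {X : Type*} [MeasurableSpace X] {μ : Measure X} [SigmaFinite μ] {S : Set X} {f w : X → ℝ}
  {γ C₀ r t : ℝ}

theorem measure_superlevel_le_of_setLIntegral_le_logModulus (hS : MeasurableSet S)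
    (hf : Measurable f) (hγ : 0 < γ) (hγ1 : γ ≤ 1) (hC₀ : 0 ≤ C₀) (hr : 0 < r)
    (h : ∀ A, MeasurableSet A → A ⊆ S → 0 < μ A →
      ∫⁻ x in A, ENNReal.ofReal (f x) ∂μ ≤ logModulus γ (C₀ * r) (μ A))
    (ht : 0 < t) :
    μ {x | x ∈ S ∧ t < f x} ≤
      ENNReal.ofReal ((2 * max 1 (C₀ / γ)) ^ γ⁻¹ * (t⁻¹ * Real.log (Real.exp 1 + t)) ^ γ⁻¹ *
        (r * Real.log (Real.exp 1 + r⁻¹)) ^ γ⁻¹) := by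
  refine le_of_forall_lt fun M hM => ?_
  have hmeas : MeasurableSet {x | x ∈ S ∧ t < f x} :=
    hS.inter (measurableSet_lt measurable_const hf)
  obtain ⟨A, hA, hAsub, hMA, hAfin⟩ := Measure.exists_subset_measure_lt_top hmeas hM
  have hApos : 0 < μ A := pos_of_gt hMA
  have markov : ENNReal.ofReal t * μ A ≤ ∫⁻ x in A, ENNReal.ofReal (f x) ∂μ := by
    rw [← setLIntegral_const]
    exact setLIntegral_mono' hA fun x hx => ENNReal.ofReal_le_ofReal (hAsub hx).2.le
  exact hMA.trans_le <| le_of_ofReal_mul_le_logModulus hγ hγ1 hC₀ hr ht hApos.ne' hAfin.ne <|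
    markov.trans (h A hA (fun x hx => (hAsub hx).1) hApos)

theorem log_weak_space_converse_general (hS : MeasurableSet S) (hw : Measurable w)
    (hf : Measurable f) (hγ : 0 < γ) (hγ1 : γ ≤ 1) (hC₀ : 0 ≤ C₀) (hr : 0 < r)
    (h : ∀ A, MeasurableSet A → A ⊆ S → 0 < ∫⁻ x in A, ENNReal.ofReal (w x) ∂μ →
      ∫⁻ x in A, ENNReal.ofReal (|f x| * w x) ∂μ ≤
        logModulus γ (C₀ * r) (∫⁻ x in A, ENNReal.ofReal (w x) ∂μ))
    (ht : 0 < t) :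
    ∫⁻ x in {x | x ∈ S ∧ t < |f x|}, ENNReal.ofReal (w x) ∂μ ≤
      ENNReal.ofReal ((2 * max 1 (C₀ / γ)) ^ γ⁻¹ * (t⁻¹ * Real.log (Real.exp 1 + t)) ^ γ⁻¹ *
        (r * Real.log (Real.exp 1 + r⁻¹)) ^ γ⁻¹) := by
  set τ : Measure X := μ.withDensity fun x => ENNReal.ofReal (w x)
  have hτ (A : Set X) : τ A = ∫⁻ x in A, ENNReal.ofReal (w x) ∂μ := withDensity_apply' _ A
  have hτ_int {A : Set X} (hA : MeasurableSet A) :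
      ∫⁻ x in A, ENNReal.ofReal |f x| ∂τ = ∫⁻ x in A, ENNReal.ofReal (|f x| * w x) ∂μ := by
    rw [setLIntegral_withDensity_eq_setLIntegral_mul _ hw.ennreal_ofReal
      hf.abs.ennreal_ofReal hA]
    simp only [Pi.mul_apply, ENNReal.ofReal_mul (abs_nonneg _), mul_comm (ENNReal.ofReal (w _))]
  have : SigmaFinite τ := SigmaFinite.withDensity_ofReal _
  rw [← hτ]
  refine measure_superlevel_le_of_setLIntegral_le_logModulus hS hf.abs hγ hγ1 hC₀ hr
    (fun A hA hAS hApos => ?_) ht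
  rw [hτ] at hApos ⊢
  exact (hτ_int hA).trans_le (h A hA hAS hApos)

end SuperlevelSets

section Measurability

variable (N : ℕ) (Ω : Set (EuclideanSpace ℝ (Fin N))) (α ρ : ℝ)

theorem measurable_wgt : Measurable (wgt N Ω α) :=
  measurable_infDist.mul (measurable_norm.pow_const _)

theorem measurable_logFun : Measurable (logFun N Ω α ρ) :=
  ((measurable_wgt N Ω α).mul
    (Real.measurable_log.comp (measurable_norm.div_const _)).abs).const_mul ρ

end Measurability

/-- If `f` satisfies the logarithmically weighted weak-space estimate with constant
`C₀|ρ|`, then its distribution function with respect to the weight `d(x)|x|^{−α}`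
satisfies the corresponding pointwise decay estimate, with a constant depending
only on `N, Ω, α, C₀` (not on `ρ`). -/
theorem log_weak_space_converse (N : ℕ) (hN : 2 < N) (Ω : Set (EuclideanSpace ℝ (Fin N)))
    (hΩo : IsOpen Ω) (hΩb : Bornology.IsBounded Ω) (h0 : (0 : EuclideanSpace ℝ (Fin N)) ∈ Ω)
    (α : ℝ) (hα0 : 0 < α) (hα : α < (N : ℝ) / 2)
    (C₀ : ℝ) (hC₀ : 0 < C₀) :
    ∃ C : ℝ, 0 < C ∧ ∀ ρ : ℝ, ρ ∈ Set.Icc (-1 : ℝ) 1 → ρ ≠ 0 →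
      (∀ A : Set (EuclideanSpace ℝ (Fin N)), MeasurableSet A → A ⊆ Ω \ {0} →
        0 < (∫⁻ x in A, ENNReal.ofReal (wgt N Ω α x)) →
        (∫⁻ x in A, ENNReal.ofReal (|logFun N Ω α ρ x| * wgt N Ω α x))
          ≤ ENNReal.ofReal (C₀ * |ρ|) *
            (∫⁻ x in A, ENNReal.ofReal (wgt N Ω α x)) ^ (1 - α / ((N : ℝ) - α)) *
            ENNReal.ofReal (Real.log (Real.exp 1 +
              ((∫⁻ x in A, ENNReal.ofReal (wgt N Ω α x))⁻¹).toReal))) →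
      ∀ t : ℝ, 0 < t →
      (∫⁻ x in {x | x ∈ Ω \ {0} ∧ t < |logFun N Ω α ρ x|},
        ENNReal.ofReal (wgt N Ω α x))
      ≤ ENNReal.ofReal
          (C * (t⁻¹ * Real.log (Real.exp 1 + t)) ^ (((N : ℝ) - α) / α) *
            (|ρ| * Real.log (Real.exp 1 + |ρ|⁻¹)) ^ (((N : ℝ) - α) / α)) := by
  have hNα : 0 < (N : ℝ) - α := by linarith
  have hγ : 0 < α / ((N : ℝ) - α) := div_pos hα0 hNα
  have hγ1 : α / ((N : ℝ) - α) ≤ 1 := (div_le_one hNα).2 (by linarith)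
  rw [← inv_div α ((N : ℝ) - α)]
  exact ⟨_, by positivity, fun ρ _ hρ h t ht => log_weak_space_converse_general
    (hΩo.measurableSet.diff (measurableSet_singleton 0)) (measurable_wgt N Ω α)
    (measurable_logFun N Ω α ρ) hγ hγ1 hC₀.le (abs_pos.2 hρ) h ht⟩
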